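/- Let h ∈ ℝ^N, let S₀ be the index set of its k largest-magnitude entries, and suppose ‖h_{S₀^c}‖₁ ≤ ‖h_{S₀}‖₁ + R√k for some R ≥ 0. Then ‖h_{S₀^c}‖₂ ≤ ‖h_{S₀}‖₂ + R, and consequently ‖h‖₂ ≤ √2·‖h_{S₀}‖₂ + R. -/

import Mathlib

open Finset

noncomputable section

/-- A vector is `k`-sparse if it has at most `k` nonzero entries. -/
def sparse {N : ℕ} (k : ℕ) (x : Fin N → ℝ) : Prop :=
  (Finset.univ.filter (fun i => x i ≠ 0)).card ≤ k

/-- Sparsity with a real bound (used for orders like `t·k` with `t` real). -/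
def sparseR {N : ℕ} (k : ℝ) (x : Fin N → ℝ) : Prop :=
  ((Finset.univ.filter (fun i => x i ≠ 0)).card : ℝ) ≤ k

/-- The ℓ₁ norm. -/
def l1 {N : ℕ} (x : Fin N → ℝ) : ℝ := ∑ i, |x i|

/-- The squared ℓ₂ norm. -/
def l2sq {N : ℕ} (x : Fin N → ℝ) : ℝ := ∑ i, (x i) ^ 2

/-- The ℓ₂ norm. -/
def l2 {N : ℕ} (x : Fin N → ℝ) : ℝ := Real.sqrt (l2sq x)

/-- The ℓ_p norm for real `p ≥ 1`. -/
def lpnorm {N : ℕ} (p : ℝ) (x : Fin N → ℝ) : ℝ := (∑ i, |x i| ^ p) ^ (1 / p)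

/-- Best `k`-term approximation error in ℓ₁. -/
def sigma1 {N : ℕ} (k : ℕ) (x : Fin N → ℝ) : ℝ :=
  sInf {t | ∃ z : Fin N → ℝ, sparse k z ∧ t = l1 (x - z)}

/-- Best `k`-term approximation error in a general norm `X`. -/
def sigmaX {N : ℕ} (X : (Fin N → ℝ) → ℝ) (k : ℕ) (x : Fin N → ℝ) : ℝ :=
  sInf {t | ∃ z : Fin N → ℝ, sparse k z ∧ t = X (x - z)}

/-- Best `k`-term approximation error in the ℓ_q norm. -/
def sigmaQ {N : ℕ} (q : ℝ) (k : ℕ) (x : Fin N → ℝ) : ℝ :=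
  sInf {t | ∃ z : Fin N → ℝ, sparse k z ∧ t = lpnorm q (x - z)}

/-- The entrywise absolute value of `A x`. -/
def absMulVec {m N : ℕ} (A : Matrix (Fin m) (Fin N) ℝ) (x : Fin N → ℝ) : Fin m → ℝ :=
  fun i => |A.mulVec x i|

/-- `X` is a norm on `ℝ^N`: triangle inequality, absolute homogeneity, definiteness. -/
def IsNorm {N : ℕ} (X : (Fin N → ℝ) → ℝ) : Prop :=
  (∀ x y, X (x + y) ≤ X x + X y) ∧ (∀ (c : ℝ) (x), X (c • x) = |c| * X x) ∧
  (∀ x, X x = 0 → x = 0)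

/-!
Let `m` be the largest entry of the tail `T`, so that `m` separates the tail from the head `S`.
Then `∑ a ^ p ≤ m ^ (p - 1) * ∑ a` over the tail and the reverse holds over the head, so replacing
the tail by the head costs only the slack `m ^ (p - 1) * R * #S ^ (1 - 1 / p)`. With
`B := ∑ i ∈ S, a i ^ p`, the bound `#S * m ^ p ≤ B` turns the slack into `R * B ^ (1 - 1 / p)`, and
`B + R * B ^ (1 - 1 / p) = (B ^ (1 / p)) ^ (p - 1) * (B ^ (1 / p) + R) ≤ (B ^ (1 / p) + R) ^ p`.
The bound on the whole vector is then Minkowski's inequality for `(x, x) + (0, R)`, where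
`x = B ^ (1 / p)`.
-/

open scoped NNReal

section

variable {ι : Type*} {S T : Finset ι} {a : ι → ℝ≥0} {m R : ℝ≥0} {p : ℝ}

theorem nnreal_rpow_eq_rpow_sub_one_mul (hp : p ≠ 0) (x : ℝ≥0) : x ^ p = x ^ (p - 1) * x := by
  rw [NNReal.rpow_of_add_eq x hp (sub_add_cancel p 1), NNReal.rpow_one]

theorem rpow_add_mul_rpow_sub_one_le (hp : 1 ≤ p) (x y : ℝ≥0) :
    x ^ p + y * x ^ (p - 1) ≤ (x + y) ^ p := by
  have hp₀ : p ≠ 0 := by positivity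
  calc x ^ p + y * x ^ (p - 1)
      = x ^ (p - 1) * (x + y) := by rw [nnreal_rpow_eq_rpow_sub_one_mul hp₀]; ring
    _ ≤ (x + y) ^ (p - 1) * (x + y) := by
        gcongr
        exact le_self_add
    _ = (x + y) ^ p := (nnreal_rpow_eq_rpow_sub_one_mul hp₀ _).symm

theorem rpow_add_rpow_add_le (hp : 1 ≤ p) (x y : ℝ≥0) :
    (x ^ p + (x + y) ^ p) ^ (1 / p) ≤ 2 ^ (1 / p) * x + y := by
  have hp₀ : p ≠ 0 := by positivity
  have minkowski := NNReal.Lp_add_le univ ![x, x] ![0, y] hp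
  simpa [Fin.sum_univ_two, hp₀, ← two_mul, NNReal.mul_rpow, NNReal.rpow_rpow_inv] using minkowski

theorem add_mul_rpow_one_sub_le (hp : 1 ≤ p) (x y : ℝ≥0) :
    x + y * x ^ (1 - 1 / p) ≤ (x ^ (1 / p) + y) ^ p := by
  have hexp : 1 / p * (p - 1) = 1 - 1 / p := by field_simp
  have h := rpow_add_mul_rpow_sub_one_le hp (x ^ (1 / p)) y
  rwa [NNReal.rpow_self_rpow_inv (by positivity), ← NNReal.rpow_mul, hexp] at h

theorem add_rpow_one_div_le (hp : 1 ≤ p) {x y z : ℝ≥0} (hy : y ≤ (x ^ (1 / p) + z) ^ p) :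
    (x + y) ^ (1 / p) ≤ 2 ^ (1 / p) * x ^ (1 / p) + z := by
  have hx : x = (x ^ (1 / p)) ^ p := (NNReal.rpow_self_rpow_inv (by positivity) x).symm
  calc (x + y) ^ (1 / p)
      ≤ ((x ^ (1 / p)) ^ p + (x ^ (1 / p) + z) ^ p) ^ (1 / p) := by rw [← hx]; gcongr
    _ ≤ 2 ^ (1 / p) * x ^ (1 / p) + z := rpow_add_rpow_add_le hp _ z

theorem sum_rpow_le_rpow_sub_one_mul_sum (hp : 1 ≤ p) (hT : ∀ j ∈ T, a j ≤ m) :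
    ∑ j ∈ T, a j ^ p ≤ m ^ (p - 1) * ∑ j ∈ T, a j := by
  rw [mul_sum]
  refine sum_le_sum fun j hj ↦ ?_
  rw [nnreal_rpow_eq_rpow_sub_one_mul (by positivity)]
  gcongr
  exact hT j hj

theorem rpow_sub_one_mul_sum_le_sum_rpow (hp : 1 ≤ p) (hS : ∀ i ∈ S, m ≤ a i) :
    m ^ (p - 1) * ∑ i ∈ S, a i ≤ ∑ i ∈ S, a i ^ p := by
  rw [mul_sum]
  refine sum_le_sum fun i hi ↦ ?_
  rw [nnreal_rpow_eq_rpow_sub_one_mul (p := p) (by positivity)]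
  gcongr
  exact hS i hi

theorem card_mul_rpow_le_sum_rpow (hp : 0 ≤ p) (hS : ∀ i ∈ S, m ≤ a i) :
    #S * m ^ p ≤ ∑ i ∈ S, a i ^ p := by
  rw [← nsmul_eq_mul]
  exact card_nsmul_le_sum _ _ _ fun i hi ↦ NNReal.rpow_le_rpow (hS i hi) hp

theorem rpow_sub_one_mul_card_rpow_le (hp : 1 ≤ p) (hS : ∀ i ∈ S, m ≤ a i) :
    m ^ (p - 1) * (#S : ℝ≥0) ^ (1 - 1 / p) ≤ (∑ i ∈ S, a i ^ p) ^ (1 - 1 / p) := by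
  have hexp : p * (1 - 1 / p) = p - 1 := by field_simp
  calc m ^ (p - 1) * (#S : ℝ≥0) ^ (1 - 1 / p)
      = (#S * m ^ p) ^ (1 - 1 / p) := by
        rw [NNReal.mul_rpow, ← NNReal.rpow_mul, hexp, mul_comm]
    _ ≤ (∑ i ∈ S, a i ^ p) ^ (1 - 1 / p) :=
        NNReal.rpow_le_rpow (card_mul_rpow_le_sum_rpow (by positivity) hS)
          (sub_nonneg.mpr ((div_le_one (by positivity)).mpr hp))

theorem sum_rpow_le_sum_rpow_add (hp : 1 ≤ p) (hle : ∀ i ∈ S, ∀ j ∈ T, a j ≤ a i)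
    (hsum : ∑ j ∈ T, a j ≤ ∑ i ∈ S, a i + R * (#S : ℝ≥0) ^ (1 - 1 / p)) :
    ∑ j ∈ T, a j ^ p ≤ ∑ i ∈ S, a i ^ p + R * (∑ i ∈ S, a i ^ p) ^ (1 - 1 / p) := by
  set m := T.sup a
  have hS : ∀ i ∈ S, m ≤ a i := fun i hi ↦ Finset.sup_le (hle i hi)
  have hT : ∀ j ∈ T, a j ≤ m := fun _ hj ↦ le_sup hj
  calc ∑ j ∈ T, a j ^ p
      ≤ m ^ (p - 1) * ∑ j ∈ T, a j := sum_rpow_le_rpow_sub_one_mul_sum hp hT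
    _ ≤ m ^ (p - 1) * (∑ i ∈ S, a i + R * (#S : ℝ≥0) ^ (1 - 1 / p)) := by gcongr
    _ = m ^ (p - 1) * ∑ i ∈ S, a i + R * (m ^ (p - 1) * (#S : ℝ≥0) ^ (1 - 1 / p)) := by ring
    _ ≤ ∑ i ∈ S, a i ^ p + R * (∑ i ∈ S, a i ^ p) ^ (1 - 1 / p) := by
        gcongr
        · exact rpow_sub_one_mul_sum_le_sum_rpow hp hS
        · exact rpow_sub_one_mul_card_rpow_le hp hS

end

theorem stmt19_general {ι E : Type*} [SeminormedAddGroup E] {p R : ℝ} (hp : 1 ≤ p) (hR : 0 ≤ R)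
    {S T : Finset ι} {h : ι → E} (hle : ∀ i ∈ S, ∀ j ∈ T, ‖h j‖ ≤ ‖h i‖)
    (hsum : ∑ j ∈ T, ‖h j‖ ≤ ∑ i ∈ S, ‖h i‖ + R * (#S : ℝ) ^ (1 - 1 / p)) :
    (∑ j ∈ T, ‖h j‖ ^ p) ^ (1 / p) ≤ (∑ i ∈ S, ‖h i‖ ^ p) ^ (1 / p) + R ∧
    (∑ i ∈ S, ‖h i‖ ^ p + ∑ j ∈ T, ‖h j‖ ^ p) ^ (1 / p) ≤
      2 ^ (1 / p) * (∑ i ∈ S, ‖h i‖ ^ p) ^ (1 / p) + R := by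
  lift R to ℝ≥0 using hR
  simp_rw [← coe_nnnorm] at hle hsum ⊢
  have htail : ∑ j ∈ T, ‖h j‖₊ ^ p ≤ ((∑ i ∈ S, ‖h i‖₊ ^ p) ^ (1 / p) + R) ^ p :=
    (sum_rpow_le_sum_rpow_add hp (mod_cast hle) (mod_cast hsum)).trans
      (add_mul_rpow_one_sub_le hp _ R)
  have htail_root : (∑ j ∈ T, ‖h j‖₊ ^ p) ^ (1 / p) ≤ (∑ i ∈ S, ‖h i‖₊ ^ p) ^ (1 / p) + R := by
    rwa [one_div, NNReal.rpow_inv_le_iff (by positivity), ← one_div]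
  exact ⟨mod_cast htail_root, mod_cast add_rpow_one_div_le hp htail⟩

/-- ℓ₂ comparison of a vector with its head on the k largest entries. -/
theorem stmt19 {N k : ℕ} (hk : 0 < k) (R : ℝ) (hR : 0 ≤ R)
    (h : Fin N → ℝ) (S₀ : Finset (Fin N)) (hcard : S₀.card = k)
    (hlargest : ∀ i ∈ S₀, ∀ j ∉ S₀, |h j| ≤ |h i|)
    (hsum : ∑ i ∈ S₀ᶜ, |h i| ≤ ∑ i ∈ S₀, |h i| + R * Real.sqrt k) :
    Real.sqrt (∑ i ∈ S₀ᶜ, (h i) ^ 2) ≤ Real.sqrt (∑ i ∈ S₀, (h i) ^ 2) + R ∧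
    l2 h ≤ Real.sqrt 2 * Real.sqrt (∑ i ∈ S₀, (h i) ^ 2) + R := by
  have hsum' : ∑ j ∈ S₀ᶜ, ‖h j‖ ≤ ∑ i ∈ S₀, ‖h i‖ + R * (#S₀ : ℝ) ^ (1 - 1 / 2 : ℝ) := by
    simpa only [Real.norm_eq_abs, sub_half, ← Real.sqrt_eq_rpow, hcard] using hsum
  simpa [l2, l2sq, Real.sqrt_eq_rpow, ← sum_add_sum_compl S₀ fun i ↦ h i ^ 2] using
    stmt19_general one_le_two hR (by simpa using hlargest) hsum'
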